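/- Let G be a finite non-cyclic group and let x ∈ G \ Cyc(G) have degree exactly 1 in the complement graph Γ̄_G, with unique neighbor y. Then the order of x is 3 or 4, y = x⁻¹, and y also has degree exactly 1 in Γ̄_G. In particular, vertices of degree 1 in Γ̄_G occur only in pairs joined by an edge. -/

import Mathlib

/-- The cyclicizer of a group `G`: the set of `y` such that `⟨x, y⟩` is cyclic
for every `x ∈ G`. -/
def cyclicizer (G : Type*) [Group G] : Set G :=
  {y | ∀ x : G, IsCyclic (Subgroup.closure ({x, y} : Set G))}

/-!
The cyclicizer is a subgroup, and every power of `x` lying outside it is equal or adjacent to `x`.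
Suppose that `y` is the only neighbor of `x`. If `x⁻¹ = x`, then `y⁻¹` is a neighbor of `x` as well,
so `y` too is an involution, and a generator of a cyclic group containing both `x` and `y` is `x` or
`y`, leaving room for only one involution. Hence `x⁻¹ ≠ x`, and `y = x⁻¹`. If `x ^ 2` is not in the
cyclicizer, then `x ^ 2 = x⁻¹` and `x` has order `3`; otherwise `x ^ 3` is not in the cyclicizer,
`x ^ 3 = x⁻¹`, and `x` has order `4`. Finally, `x` and `x⁻¹` generate the same subgroup, so any
further neighbor of `x⁻¹` would be one of `x`.
-/

theorem neighborSet_eq_singleton_iff {V : Type*} {Γ : SimpleGraph V} {v w : V} :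
    Γ.neighborSet v = {w} ↔ Γ.Adj v w ∧ ∀ u : V, Γ.Adj v u → u = w :=
  Set.eq_singleton_iff_unique_mem

section

variable {G : Type*} [Group G] {a b c x y : G}

theorem isCyclic_closure_pair_iff :
    IsCyclic (Subgroup.closure ({a, b} : Set G)) ↔
      ∃ c : G, a ∈ Subgroup.zpowers c ∧ b ∈ Subgroup.zpowers c := by
  simp only [← Set.pair_subset_iff, ← SetLike.mem_coe, ← Subgroup.closure_le]
  constructor
  · intro h
    obtain ⟨c, hc⟩ := (Subgroup.isCyclic_iff_exists_zpowers_eq_top _).1 h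
    exact ⟨c, hc.ge⟩
  · rintro ⟨c, hle⟩
    exact Subgroup.isCyclic_of_le hle

theorem eq_one_or_eq_of_mem_zpowers_of_inv_eq_self (hc : c⁻¹ = c)
    (ha : a ∈ Subgroup.zpowers c) : a = 1 ∨ a = c := by
  have hsq : c ^ (2 : ℤ) = 1 := by rw [zpow_two, ← inv_eq_iff_mul_eq_one, hc]
  obtain ⟨k, rfl⟩ := Subgroup.mem_zpowers_iff.1 ha
  obtain ⟨m, rfl | rfl⟩ := Int.even_or_odd' k
  · exact .inl (by rw [zpow_mul, hsq, one_zpow])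
  · exact .inr (by rw [zpow_add_one, zpow_mul, hsq, one_zpow, one_mul])

theorem mem_cyclicizer_iff :
    b ∈ cyclicizer G ↔ ∀ a : G, ∃ c : G, a ∈ Subgroup.zpowers c ∧ b ∈ Subgroup.zpowers c :=
  forall_congr' fun _ ↦ isCyclic_closure_pair_iff

variable (G) in
/-- The cyclicizer as a subgroup. -/
def cyclicizerSubgroup : Subgroup G where
  carrier := cyclicizer G
  one_mem' := mem_cyclicizer_iff.2 fun a ↦ ⟨a, Subgroup.mem_zpowers a, one_mem _⟩
  inv_mem' {b} hb := by simpa only [mem_cyclicizer_iff, inv_mem_iff] using hb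
  mul_mem' {a b} ha hb := by
    refine mem_cyclicizer_iff.2 fun w ↦ ?_
    obtain ⟨c, hwc, hac⟩ := mem_cyclicizer_iff.1 ha w
    obtain ⟨d, hcd, hbd⟩ := mem_cyclicizer_iff.1 hb c
    have hle : Subgroup.zpowers c ≤ Subgroup.zpowers d := Subgroup.zpowers_le.2 hcd
    exact ⟨d, hle hwc, mul_mem (hle hac) hbd⟩

theorem mem_cyclicizerSubgroup : x ∈ cyclicizerSubgroup G ↔ x ∈ cyclicizer G := Iff.rfl

theorem inv_mem_cyclicizer_iff : x⁻¹ ∈ cyclicizer G ↔ x ∈ cyclicizer G :=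
  inv_mem_iff (H := cyclicizerSubgroup G)

theorem ne_one_of_notMem_cyclicizer (hx : x ∉ cyclicizer G) : x ≠ 1 :=
  ne_of_mem_of_not_mem (one_mem (cyclicizerSubgroup G)) hx |>.symm

theorem notMem_cyclicizer_of_mem_zpowers (hx : x ∉ cyclicizer G) (hxc : x ∈ Subgroup.zpowers c) :
    c ∉ cyclicizer G :=
  fun hc ↦ hx (Subgroup.zpowers_le.2 (mem_cyclicizerSubgroup.2 hc) hxc)

variable (G) in
/-- The complement `Γ̄_G` of the non-cyclic graph. The vertex type is all of `G`: elements of the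
cyclicizer are kept as isolated vertices, so vertices of degree one are those of `Γ̄_G`. -/
def complNonCyclicGraph : SimpleGraph G where
  Adj x y := x ∉ cyclicizer G ∧ y ∉ cyclicizer G ∧ y ≠ x ∧
    IsCyclic (Subgroup.closure ({x, y} : Set G))
  symm := ⟨fun x y ⟨hx, hy, hne, hcyc⟩ ↦ ⟨hy, hx, hne.symm, Set.pair_comm x y ▸ hcyc⟩⟩
  loopless := ⟨fun _ ⟨_, _, hne, _⟩ ↦ hne rfl⟩

namespace complNonCyclicGraph

theorem adj_of_mem_zpowers (hx : x ∉ cyclicizer G) (hy : y ∉ cyclicizer G) (hne : y ≠ x)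
    (hyx : y ∈ Subgroup.zpowers x) : (complNonCyclicGraph G).Adj x y :=
  ⟨hx, hy, hne, isCyclic_closure_pair_iff.2 ⟨x, Subgroup.mem_zpowers x, hyx⟩⟩

theorem adj_inv_right (h : (complNonCyclicGraph G).Adj x y) (hne : y⁻¹ ≠ x) :
    (complNonCyclicGraph G).Adj x y⁻¹ := by
  obtain ⟨hx, hy, -, hcyc⟩ := h
  refine ⟨hx, inv_mem_cyclicizer_iff.not.2 hy, hne, ?_⟩
  simpa only [isCyclic_closure_pair_iff, inv_mem_iff] using hcyc

theorem inv_ne_self_of_neighborSet_eq_singleton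
    (h : (complNonCyclicGraph G).neighborSet x = {y}) : x⁻¹ ≠ x := by
  intro hxinv
  obtain ⟨hadj, huniq⟩ := neighborSet_eq_singleton_iff.1 h
  have hyinv : y⁻¹ = y :=
    huniq _ (adj_inv_right hadj fun hyx ↦ hadj.ne' (by rw [← inv_inv y, hyx, hxinv]))
  obtain ⟨hx, hy, hne, hcyc⟩ := hadj
  obtain ⟨c, hxc, hyc⟩ := isCyclic_closure_pair_iff.1 hcyc
  have hc : c = x ∨ c = y := or_iff_not_imp_left.2 fun hcx ↦
    huniq c (adj_of_mem_zpowers (notMem_cyclicizer_of_mem_zpowers hx hxc) hx (Ne.symm hcx) hxc).symm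
  have hcinv : c⁻¹ = c := by rcases hc with rfl | rfl <;> assumption
  have hx_eq : x = c := (eq_one_or_eq_of_mem_zpowers_of_inv_eq_self hcinv hxc).resolve_left
    (ne_one_of_notMem_cyclicizer hx)
  have hy_eq : y = c := (eq_one_or_eq_of_mem_zpowers_of_inv_eq_self hcinv hyc).resolve_left
    (ne_one_of_notMem_cyclicizer hy)
  exact hne (hy_eq.trans hx_eq.symm)

theorem eq_inv_of_neighborSet_eq_singleton
    (h : (complNonCyclicGraph G).neighborSet x = {y}) : y = x⁻¹ := by
  obtain ⟨⟨hx, -⟩, huniq⟩ := neighborSet_eq_singleton_iff.1 h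
  exact (huniq _ <| adj_of_mem_zpowers hx (inv_mem_cyclicizer_iff.not.2 hx)
    (inv_ne_self_of_neighborSet_eq_singleton h) (inv_mem (Subgroup.mem_zpowers x))).symm

theorem neighborSet_eq_singleton_symm
    (h : (complNonCyclicGraph G).neighborSet x = {y}) :
    (complNonCyclicGraph G).neighborSet y = {x} := by
  obtain ⟨hadj, huniq⟩ := neighborSet_eq_singleton_iff.1 h
  refine neighborSet_eq_singleton_iff.2 ⟨hadj.symm, fun z hyz ↦ ?_⟩
  by_contra hzx
  rw [eq_inv_of_neighborSet_eq_singleton h] at hyz huniq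
  have hzx_adj : (complNonCyclicGraph G).Adj z x := by
    simpa using adj_inv_right hyz.symm (by simpa using Ne.symm hzx)
  exact hyz.ne' (huniq z hzx_adj.symm)

theorem pow_succ_eq_one_of_neighborSet_eq_singleton {n : ℕ}
    (h : (complNonCyclicGraph G).neighborSet x = {y}) (hmem : x ^ n ∉ cyclicizer G)
    (hne : x ^ n ≠ x) : x ^ (n + 1) = 1 := by
  obtain ⟨⟨hx, -⟩, huniq⟩ := neighborSet_eq_singleton_iff.1 h
  have hpow : x ^ n = y :=
    huniq _ (adj_of_mem_zpowers hx hmem hne (pow_mem (Subgroup.mem_zpowers x) n))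
  rw [pow_succ, hpow, eq_inv_of_neighborSet_eq_singleton h, inv_mul_cancel]

theorem orderOf_eq_three_or_four_of_neighborSet_eq_singleton
    (h : (complNonCyclicGraph G).neighborSet x = {y}) : orderOf x = 3 ∨ orderOf x = 4 := by
  obtain ⟨⟨hx, -⟩, -⟩ := neighborSet_eq_singleton_iff.1 h
  have hone : x ≠ 1 := ne_one_of_notMem_cyclicizer hx
  have hsq : x ^ 2 ≠ 1 := by
    rw [sq, ← inv_eq_iff_mul_eq_one.ne]
    exact inv_ne_self_of_neighborSet_eq_singleton h
  by_cases hmem : x ^ 2 ∈ cyclicizer G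
  · have hcube_mem : x ^ 3 ∉ cyclicizer G := by
      rw [pow_succ']
      exact ((cyclicizerSubgroup G).mul_mem_cancel_right hmem).not.2 hx
    have hcube_ne : x ^ 3 ≠ x := by rwa [pow_succ, Ne, mul_eq_right]
    have hpow : x ^ 4 = 1 := pow_succ_eq_one_of_neighborSet_eq_singleton h hcube_mem hcube_ne
    exact .inr (orderOf_eq_prime_pow (p := 2) (n := 1) hsq hpow)
  · have hsq_ne : x ^ 2 ≠ x := by rwa [sq, Ne, mul_eq_right]
    have hpow : x ^ 3 = 1 := pow_succ_eq_one_of_neighborSet_eq_singleton h hmem hsq_ne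
    exact .inl (orderOf_eq_prime hpow hone)

end complNonCyclicGraph

end

open complNonCyclicGraph in
theorem compl_degree_one_pairs_general {G : Type*} [Group G] {x y : G}
    (hx : x ∉ cyclicizer G) (hy : y ∉ cyclicizer G) (hxy : y ≠ x)
    (hadj : IsCyclic (Subgroup.closure ({x, y} : Set G)))
    (huniq : ∀ z : G, z ∉ cyclicizer G → z ≠ x →
      IsCyclic (Subgroup.closure ({x, z} : Set G)) → z = y) :
    (orderOf x = 3 ∨ orderOf x = 4) ∧ y = x⁻¹ ∧
      ∀ z : G, z ∉ cyclicizer G → z ≠ y →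
        IsCyclic (Subgroup.closure ({y, z} : Set G)) → z = x := by
  have h : (complNonCyclicGraph G).neighborSet x = {y} := neighborSet_eq_singleton_iff.2
    ⟨⟨hx, hy, hxy, hadj⟩, fun z ⟨_, hz, hzx, hcyc⟩ ↦ huniq z hz hzx hcyc⟩
  have hsymm := neighborSet_eq_singleton_symm h
  exact ⟨orderOf_eq_three_or_four_of_neighborSet_eq_singleton h,
    eq_inv_of_neighborSet_eq_singleton h,
    fun z hz hzy hcyc ↦ (neighborSet_eq_singleton_iff.1 hsymm).2 z ⟨hy, hz, hzy, hcyc⟩⟩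

theorem compl_degree_one_pairs (G : Type*) [Group G] [Finite G]
    (hG : ¬ IsCyclic G) (x y : G)
    (hx : x ∉ cyclicizer G) (hy : y ∉ cyclicizer G) (hxy : y ≠ x)
    (hadj : IsCyclic (Subgroup.closure ({x, y} : Set G)))
    (huniq : ∀ z : G, z ∉ cyclicizer G → z ≠ x →
      IsCyclic (Subgroup.closure ({x, z} : Set G)) → z = y) :
    (orderOf x = 3 ∨ orderOf x = 4) ∧ y = x⁻¹ ∧
      ∀ z : G, z ∉ cyclicizer G → z ≠ y →
        IsCyclic (Subgroup.closure ({y, z} : Set G)) → z = x :=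
  compl_degree_one_pairs_general hx hy hxy hadj huniq
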